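/- For a, b ∈ ℝ^p and Σ_1, Σ_2 symmetric positive definite p×p matrices, ‖N(a,Σ_1) - N(b,Σ_2)‖ ≤ C(Σ_1) (‖b - a‖_E + ‖Σ_2 - Σ_1‖_F) for some constant C(Σ_1) depending only on Σ_1, combining the bounds ‖N(a,Σ_1) - N(b,Σ_1)‖ ≤ ‖b-a‖_E ‖Σ_1^{-1/2}‖_F and ‖N(a,Σ_1) - N(b,Σ_2)‖ ≤ ‖N(a,Σ_1) - N(b,Σ_1)‖ + (3/2)‖Σ_1^{-1/2} Σ_2 Σ_1^{-1/2} - I‖_F. -/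

import Mathlib

open MeasureTheory Matrix

/-- Total variation distance between two measures: sup over measurable sets. -/
noncomputable def tvDist {α : Type*} [MeasurableSpace α] (μ ν : Measure α) : ℝ :=
  ⨆ A : {s : Set α // MeasurableSet s}, |(μ A.1).toReal - (ν A.1).toReal|

/-- The p-dimensional Gaussian measure N(a, S), defined by its Lebesgue density. -/
noncomputable def gaussianPi {p : ℕ} (a : Fin p → ℝ) (S : Matrix (Fin p) (Fin p) ℝ) :
    Measure (Fin p → ℝ) :=
  volume.withDensity fun x => ENNReal.ofReal
    ((Real.sqrt ((2 * Real.pi) ^ p * S.det))⁻¹ *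
      Real.exp (-((x - a) ⬝ᵥ S⁻¹.mulVec (x - a)) / 2))

/-- The Frobenius norm of a matrix. -/
noncomputable def frobNorm {p : ℕ} (B : Matrix (Fin p) (Fin p) ℝ) : ℝ :=
  Real.sqrt (∑ i, ∑ j, (B i j) ^ 2)


section helpers

open scoped MatrixOrder Matrix.Norms.L2Operator in
theorem gx_factor {p : ℕ} (S : Matrix (Fin p) (Fin p) ℝ) (hS : S.PosDef) :
    ∃ B : Matrix (Fin p) (Fin p) ℝ, S⁻¹ = Bᵀ * B ∧ B.det ≠ 0 ∧ S.det = (B.det ^ 2)⁻¹ := by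
  have h := hS.inv
  obtain ⟨B, hB⟩ := CStarAlgebra.nonneg_iff_eq_star_mul_self.mp h.posSemidef.nonneg
  have hB' : S⁻¹ = Bᵀ * B := by rw [hB, star_eq_conjTranspose, conjTranspose_eq_transpose_of_trivial]
  have hd : S.det⁻¹ = B.det ^ 2 := by
    have := congrArg det hB'
    rw [det_nonsing_inv, Ring.inverse_eq_inv, det_mul, det_transpose] at this
    rw [this]; ring
  have hp := hS.det_pos
  refine ⟨B, hB', ?_, ?_⟩
  · intro h0
    rw [h0] at hd
    have := inv_pos.mpr hp
    simp at hd
    linarith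
  · rw [← hd, inv_inv]

theorem gx_quad {p : ℕ} (B : Matrix (Fin p) (Fin p) ℝ) (y : Fin p → ℝ) :
    y ⬝ᵥ (Bᵀ * B).mulVec y = ∑ i, (B.mulVec y i) ^ 2 := by
  rw [← mulVec_mulVec, dotProduct_mulVec, vecMul_transpose]
  simp [dotProduct, sq]

theorem gx_integral {p : ℕ} (B : Matrix (Fin p) (Fin p) ℝ) (hB : B.det ≠ 0) (t : ℝ) :
    ∫ y : Fin p → ℝ, Real.exp (-t * ∑ i, (B.mulVec y i) ^ 2)
      = |B.det|⁻¹ * (Real.sqrt (Real.pi / t)) ^ p := by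
  have h1 : ∫ z : Fin p → ℝ, Real.exp (-t * ∑ i, (z i) ^ 2) = (Real.sqrt (Real.pi / t)) ^ p := by
    have := integral_fintype_prod_volume_eq_pow (ι := Fin p) (fun x : ℝ => Real.exp (-t * x ^ 2))
    rw [integral_gaussian, Fintype.card_fin] at this
    rw [← this]
    congr 1
    ext z
    rw [Finset.mul_sum, Real.exp_sum]
  have h2 := Real.map_matrix_volume_pi_eq_smul_volume_pi hB
  have h3 : ∫ z : Fin p → ℝ, Real.exp (-t * ∑ i, (z i) ^ 2) ∂(Measure.map (toLin' B) volume)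
      = ∫ y : Fin p → ℝ, Real.exp (-t * ∑ i, (B.mulVec y i) ^ 2) := by
    rw [integral_map]
    · simp
    · exact (LinearMap.continuous_of_finiteDimensional _).aemeasurable
    · exact Continuous.aestronglyMeasurable (by fun_prop)
  rw [← h3, h2, integral_smul_measure, h1, ENNReal.toReal_ofReal (abs_nonneg _), abs_inv,
    smul_eq_mul]

theorem gx_integrable {p : ℕ} (B : Matrix (Fin p) (Fin p) ℝ) (hB : B.det ≠ 0) (t : ℝ) (ht : 0 < t) :
    Integrable fun y : Fin p → ℝ => Real.exp (-t * ∑ i, (B.mulVec y i) ^ 2) := by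
  by_contra h
  have h1 := gx_integral B hB t
  rw [integral_undef h] at h1
  have : 0 < |B.det|⁻¹ * (Real.sqrt (Real.pi / t)) ^ p := by positivity
  linarith

/-- log density -/
noncomputable def gxU {p : ℕ} (S : Matrix (Fin p) (Fin p) ℝ) (y : Fin p → ℝ) : ℝ :=
  -(p * Real.log (2 * Real.pi) + Real.log S.det) / 2 - (y ⬝ᵥ S⁻¹.mulVec y) / 2

theorem gx_dens {p : ℕ} (S : Matrix (Fin p) (Fin p) ℝ) (hS : S.PosDef) (y : Fin p → ℝ) :
    (Real.sqrt ((2 * Real.pi) ^ p * S.det))⁻¹ * Real.exp (-(y ⬝ᵥ S⁻¹.mulVec y) / 2)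
      = Real.exp (gxU S y) := by
  have hd := hS.det_pos
  have hpos : 0 < (2 * Real.pi) ^ p * S.det := by positivity
  have h : (Real.sqrt ((2 * Real.pi) ^ p * S.det))⁻¹
      = Real.exp (-(p * Real.log (2 * Real.pi) + Real.log S.det) / 2) := by
    rw [← Real.log_pow, ← Real.log_mul (by positivity) hd.ne', neg_div, Real.exp_neg,
      ← Real.log_sqrt hpos.le, Real.exp_log (Real.sqrt_pos.mpr hpos)]
  rw [h, ← Real.exp_add, gxU]
  ring_nf

theorem gx_cont {p : ℕ} (S : Matrix (Fin p) (Fin p) ℝ) : Continuous (gxU S) := by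
  unfold gxU
  fun_prop

theorem gx_mass {p : ℕ} (S : Matrix (Fin p) (Fin p) ℝ) (hS : S.PosDef) :
    ∫ y, Real.exp (gxU S y) = 1 := by
  simp_rw [← gx_dens S hS]
  obtain ⟨B, h1, h2, h3⟩ := gx_factor S hS
  rw [integral_const_mul]
  have := gx_integral B h2 (1/2)
  have e : ∀ y : Fin p → ℝ, -(y ⬝ᵥ S⁻¹.mulVec y) / 2 = -(1/2) * ∑ i, (B.mulVec y i) ^ 2 := by
    intro y; rw [h1, gx_quad]; ring
  simp_rw [e]
  rw [this, h3, Real.sqrt_mul (by positivity), Real.sqrt_inv, Real.sqrt_sq_eq_abs]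
  have : √((2 * Real.pi) ^ p) = √(Real.pi / (1/2)) ^ p := by
    rw [show Real.pi / (1/2) = 2 * Real.pi by ring]
    rw [Real.sqrt_eq_iff_mul_self_eq (by positivity) (by positivity), ← mul_pow,
      Real.mul_self_sqrt (by positivity)]
  rw [this]
  have : √(Real.pi / (1/2)) ^ p ≠ 0 := by positivity
  have : |B.det| ≠ 0 := by positivity
  field_simp

theorem gx_int {p : ℕ} (S : Matrix (Fin p) (Fin p) ℝ) (hS : S.PosDef) :
    Integrable fun y => Real.exp (gxU S y) := by
  by_contra h
  have h1 := gx_mass S hS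
  rw [integral_undef h] at h1
  norm_num at h1

theorem gx_apply {p : ℕ} (S : Matrix (Fin p) (Fin p) ℝ) (hS : S.PosDef) (a : Fin p → ℝ)
    (A : Set (Fin p → ℝ)) (hA : MeasurableSet A) :
    (gaussianPi a S A).toReal = ∫ x in A, Real.exp (gxU S (x - a)) := by
  unfold gaussianPi
  simp_rw [gx_dens S hS]
  rw [withDensity_apply _ hA, ← ofReal_integral_eq_lintegral_ofReal, ENNReal.toReal_ofReal]
  · exact integral_nonneg fun _ => (Real.exp_pos _).le
  · exact ((gx_int S hS).comp_sub_right a).integrableOn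
  · exact Filter.Eventually.of_forall fun _ => (Real.exp_pos _).le

theorem gx_prob {p : ℕ} (S : Matrix (Fin p) (Fin p) ℝ) (hS : S.PosDef) (a : Fin p → ℝ) :
    IsProbabilityMeasure (gaussianPi a S) := by
  constructor
  have h := gx_apply S hS a Set.univ MeasurableSet.univ
  rw [setIntegral_univ, integral_sub_right_eq_self (fun y => Real.exp (gxU S y)), gx_mass S hS] at h
  exact (ENNReal.toReal_eq_one_iff _).mp h

theorem gx_tv_le_one {p : ℕ} (S1 S2 : Matrix (Fin p) (Fin p) ℝ) (h1 : S1.PosDef) (h2 : S2.PosDef)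
    (a b : Fin p → ℝ) : tvDist (gaussianPi a S1) (gaussianPi b S2) ≤ 1 := by
  have := gx_prob S1 h1 a
  have := gx_prob S2 h2 b
  unfold tvDist
  have : Nonempty {s : Set (Fin p → ℝ) // MeasurableSet s} := ⟨⟨∅, MeasurableSet.empty⟩⟩
  refine ciSup_le fun A => ?_
  have e1 : (gaussianPi a S1 A.1).toReal ≤ 1 := measureReal_le_one
  have e2 : (gaussianPi b S2 A.1).toReal ≤ 1 := measureReal_le_one
  have e3 : 0 ≤ (gaussianPi a S1 A.1).toReal := ENNReal.toReal_nonneg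
  have e4 : 0 ≤ (gaussianPi b S2 A.1).toReal := ENNReal.toReal_nonneg
  rw [abs_le]; constructor <;> linarith

/-- total variation bound from a pointwise bound of the log density ratio -/
theorem gx_tv {p : ℕ} (S1 S2 : Matrix (Fin p) (Fin p) ℝ) (h1 : S1.PosDef) (h2 : S2.PosDef)
    (a b : Fin p → ℝ) (H : (Fin p → ℝ) → ℝ) (hH : Integrable H) 
    (hb : ∀ y, Real.exp (gxU S1 y) * |gxU S1 y - gxU S2 (y - (b - a))| ≤ H y) :
    tvDist (gaussianPi a S1) (gaussianPi b S2) ≤ ∫ y, H y := by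
  have := gx_prob S1 h1 a
  have := gx_prob S2 h2 b
  have H0 : ∀ y, 0 ≤ H y := fun y => le_trans (by positivity) (hb y)
  have key : ∀ A, MeasurableSet A →
      (gaussianPi a S1 A).toReal - (gaussianPi b S2 A).toReal ≤ ∫ y, H y := by
    intro A hA
    have i1 := (gx_int S1 h1).comp_sub_right a
    have i2 := (gx_int S2 h2).comp_sub_right b
    have i3 := hH.comp_sub_right a
    rw [gx_apply S1 h1 a A hA, gx_apply S2 h2 b A hA, ← integral_sub i1.integrableOn i2.integrableOn,
      ← integral_sub_right_eq_self H a]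
    refine le_trans (integral_mono (i1.integrableOn.sub i2.integrableOn) i3.integrableOn ?_) 
      (setIntegral_le_integral i3 (Filter.Eventually.of_forall fun x => H0 _))
    intro x
    refine le_trans ?_ (hb (x - a))
    have e : x - a - (b - a) = x - b := by abel
    rw [e]
    set u := gxU S1 (x - a)
    set v := gxU S2 (x - b)
    have l1 := Real.add_one_le_exp (v - u)
    have l2 : Real.exp v = Real.exp u * Real.exp (v - u) := by rw [← Real.exp_add]; ring_nf
    have l3 := le_abs_self (u - v)
    have l4 := Real.exp_pos u
    show Real.exp u - Real.exp v ≤ _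
    rw [l2]
    nlinarith
  have : Nonempty {s : Set (Fin p → ℝ) // MeasurableSet s} := ⟨⟨∅, MeasurableSet.empty⟩⟩
  refine ciSup_le fun A => ?_
  have k1 := key A.1 A.2
  have k2 := key A.1ᶜ A.2.compl
  have c1 : (gaussianPi a S1 A.1ᶜ).toReal = 1 - (gaussianPi a S1 A.1).toReal :=
    probReal_compl_eq_one_sub A.2
  have c2 : (gaussianPi b S2 A.1ᶜ).toReal = 1 - (gaussianPi b S2 A.1).toReal :=
    probReal_compl_eq_one_sub A.2
  rw [abs_le]; constructor <;> linarith

open scoped Matrix.Norms.Frobenius in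
theorem gx_local {p : ℕ} (S1 : Matrix (Fin p) (Fin p) ℝ) (hS1 : S1.PosDef) :
    ∃ K > 0, ∃ ε > 0, ∀ S2 : Matrix (Fin p) (Fin p) ℝ, frobNorm (S2 - S1) < ε →
      |Real.log S2.det - Real.log S1.det| ≤ K * frobNorm (S2 - S1) ∧
      ∀ i j, |S2⁻¹ i j - S1⁻¹ i j| ≤ K * frobNorm (S2 - S1) := by
  have hfn : ∀ M : Matrix (Fin p) (Fin p) ℝ, frobNorm M = ‖M‖ := by
    intro M
    rw [frobenius_norm_def, frobNorm, Real.sqrt_eq_rpow]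
    simp
  have hent : ∀ (M : Matrix (Fin p) (Fin p) ℝ) i j, |M i j| ≤ ‖M‖ := by
    intro M i j
    rw [← hfn, frobNorm]
    apply Real.le_sqrt_of_sq_le
    rw [sq_abs]
    refine le_trans ?_ (Finset.single_le_sum (f := fun i => ∑ j, M i j ^ 2)
      (fun i _ => Finset.sum_nonneg fun j _ => sq_nonneg _) (Finset.mem_univ i))
    exact Finset.single_le_sum (f := fun j => M i j ^ 2) (fun j _ => sq_nonneg _) (Finset.mem_univ j)
  have : CompleteSpace (Matrix (Fin p) (Fin p) ℝ) := FiniteDimensional.complete ℝ _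
  have d1 : DifferentiableAt ℝ (fun M : Matrix (Fin p) (Fin p) ℝ => Real.log M.det) S1 := by
    refine DifferentiableAt.log ?_ hS1.det_pos.ne'
    have he : ∀ i j, DifferentiableAt ℝ (fun M : Matrix (Fin p) (Fin p) ℝ => M i j) S1 := by
      intro i j
      exact (LinearMap.toContinuousLinearMap (Matrix.entryLinearMap ℝ ℝ i j)).differentiableAt
    have hd : (fun M : Matrix (Fin p) (Fin p) ℝ => M.det)
        = fun M => ∑ σ : Equiv.Perm (Fin p), Equiv.Perm.sign σ • ∏ i, M (σ i) i :=
      funext fun M => Matrix.det_apply M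
    change DifferentiableAt ℝ (fun M : Matrix (Fin p) (Fin p) ℝ => M.det) S1
    rw [hd]
    refine DifferentiableAt.fun_sum fun σ _ => ?_
    refine DifferentiableAt.const_smul ?_ _
    exact (HasFDerivAt.finsetProd fun i _ => (he (σ i) i).hasFDerivAt).differentiableAt
  have hu : IsUnit S1 := hS1.isUnit
  have d2 : DifferentiableAt ℝ (fun M : Matrix (Fin p) (Fin p) ℝ => M⁻¹) S1 := by
    have := differentiableAt_inverse (𝕜 := ℝ) hu
    have hi : (fun M : Matrix (Fin p) (Fin p) ℝ => M⁻¹) = Ring.inverse :=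
      funext fun M => nonsing_inv_eq_ringInverse M
    rw [hi]
    exact this
  obtain ⟨K1, hK1, b1⟩ := d1.isBigO_sub.exists_pos
  obtain ⟨K2, hK2, b2⟩ := d2.isBigO_sub.exists_pos
  obtain ⟨ε, hε, hb⟩ := Metric.eventually_nhds_iff.mp (b1.bound.and b2.bound)
  refine ⟨K1 + K2, by positivity, ε, hε, fun S2 h => ?_⟩
  rw [hfn] at *
  obtain ⟨c1, c2⟩ := hb (y := S2) (by rwa [dist_eq_norm])
  have n0 := norm_nonneg (S2 - S1)
  refine ⟨?_, fun i j => ?_⟩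
  · rw [Real.norm_eq_abs] at c1
    nlinarith
  · have := hent (S2⁻¹ - S1⁻¹) i j
    rw [Matrix.sub_apply] at this
    nlinarith

theorem gx_norm {p : ℕ} (B : Matrix (Fin p) (Fin p) ℝ) (hB : B.det ≠ 0) :
    ∃ κ > 0, ∀ y : Fin p → ℝ, ‖y‖ ^ 2 ≤ κ * ∑ i, (B.mulVec y i) ^ 2 := by
  refine ⟨1 + ∑ i, ∑ j, (B⁻¹ i j) ^ 2, by positivity, fun y => ?_⟩
  have hy : y = B⁻¹.mulVec (B.mulVec y) := by
    rw [mulVec_mulVec, nonsing_inv_mul _ (isUnit_iff_ne_zero.mpr hB), one_mulVec]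
  set z := B.mulVec y
  have hz : 0 ≤ ∑ i, z i ^ 2 := by positivity
  have hQ : 0 ≤ ∑ i, ∑ j, (B⁻¹ i j) ^ 2 := by positivity
  have : ‖y‖ ≤ Real.sqrt ((1 + ∑ i, ∑ j, (B⁻¹ i j) ^ 2) * ∑ i, z i ^ 2) := by
    rw [pi_norm_le_iff_of_nonneg (Real.sqrt_nonneg _)]
    intro i
    rw [Real.norm_eq_abs]
    apply Real.le_sqrt_of_sq_le
    rw [sq_abs]
    have h1 : y i = ∑ j, B⁻¹ i j * z j := congrFun hy i
    rw [h1]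
    refine (Finset.sum_mul_sq_le_sq_mul_sq _ _ _).trans ?_
    refine mul_le_mul_of_nonneg_right ?_ hz
    have : ∑ j, B⁻¹ i j ^ 2 ≤ ∑ i, ∑ j, B⁻¹ i j ^ 2 := Finset.single_le_sum (f := fun i => ∑ j, B⁻¹ i j ^ 2)
      (fun i _ => Finset.sum_nonneg fun j _ => sq_nonneg _) (Finset.mem_univ i)
    linarith
  calc ‖y‖ ^ 2 ≤ _ := pow_le_pow_left₀ (norm_nonneg _) this 2
    _ = _ := Real.sq_sqrt (by positivity)

theorem gx_term (N K M δ y y' d d' P P' : ℝ) (hy : |y| ≤ N) (hy' : |y'| ≤ N) (hd : |d| ≤ δ)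
    (hd' : |d'| ≤ δ) (hδ : δ ≤ 1) (hP : |P' - P| ≤ K * δ) (hP' : |P'| ≤ M) :
    |y * (P * y') - (y - d) * (P' * (y' - d'))| ≤ δ * ((K + M) * (1 + N) ^ 2) := by
  have N0 := (abs_nonneg y).trans hy
  have δ0 := (abs_nonneg d).trans hd
  have M0 := (abs_nonneg P').trans hP'
  have K0 := (abs_nonneg _).trans hP
  have e : y * (P * y') - (y - d) * (P' * (y' - d'))
      = -(y * y' * (P' - P)) + P' * (d * y' + y * d' - d * d') := by ring
  have a1 : |y * y' * (P' - P)| ≤ N * N * (K * δ) := by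
    rw [abs_mul, abs_mul]; gcongr
  have a2 : |d * y' + y * d' - d * d'| ≤ δ * N + N * δ + δ * 1 := by
    refine (abs_sub _ _).trans ?_
    refine add_le_add ((abs_add_le _ _).trans ?_) ?_
    · rw [abs_mul, abs_mul]; gcongr
    · rw [abs_mul]; gcongr; linarith
  have a3 : |P' * (d * y' + y * d' - d * d')| ≤ M * (δ * N + N * δ + δ * 1) := by
    rw [abs_mul]; gcongr
  rw [e]
  refine (abs_add_le _ _).trans ?_
  rw [abs_neg]
  have : 0 ≤ K * δ * (1 + 2 * N) := by positivity
  have : 0 ≤ M * δ * N ^ 2 := by positivity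
  nlinarith

theorem gx_U {p : ℕ} (S1 S2 : Matrix (Fin p) (Fin p) ℝ) (y d : Fin p → ℝ) (K M δ : ℝ)
    (hd : ∀ i, |d i| ≤ δ) (hδ0 : 0 ≤ δ) (hK : 0 ≤ K) (hM : 0 ≤ M)
    (hδ : δ ≤ 1) (hP : ∀ i j, |S2⁻¹ i j - S1⁻¹ i j| ≤ K * δ) (hP' : ∀ i j, |S2⁻¹ i j| ≤ M)
    (hdet : |Real.log S2.det - Real.log S1.det| ≤ K * δ) :
    |gxU S1 y - gxU S2 (y - d)| ≤ δ * ((K + 2 * (p ^ 2 * (K + M))) * (1 + ‖y‖ ^ 2)) := by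
  have q : |y ⬝ᵥ S1⁻¹.mulVec y - (y - d) ⬝ᵥ S2⁻¹.mulVec (y - d)|
      ≤ p ^ 2 * (δ * ((K + M) * (1 + ‖y‖) ^ 2)) := by
    simp only [dotProduct, mulVec, Finset.mul_sum, ← Finset.sum_sub_distrib]
    refine (Finset.abs_sum_le_sum_abs _ _).trans ?_
    refine (Finset.sum_le_card_nsmul _ _ (p * (δ * ((K + M) * (1 + ‖y‖) ^ 2))) ?_).trans ?_
    · intro i _
      refine (Finset.abs_sum_le_sum_abs _ _).trans ?_
      refine (Finset.sum_le_card_nsmul _ _ (δ * ((K + M) * (1 + ‖y‖) ^ 2)) ?_).trans ?_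
      · intro j _
        exact gx_term _ _ _ _ _ _ _ _ _ _ (norm_le_pi_norm y i) (norm_le_pi_norm y j) (hd i) (hd j)
          hδ (hP i j) (hP' i j)
      · simp
    · simp [sq, mul_assoc]
  have e : gxU S1 y - gxU S2 (y - d) = (Real.log S2.det - Real.log S1.det) / 2
      - (y ⬝ᵥ S1⁻¹.mulVec y - (y - d) ⬝ᵥ S2⁻¹.mulVec (y - d)) / 2 := by
    unfold gxU; ring
  rw [e]
  refine (abs_sub _ _).trans ?_
  rw [abs_div, abs_div, abs_two]
  have n1 : (1 + ‖y‖) ^ 2 ≤ 2 * (1 + ‖y‖ ^ 2) := by nlinarith [sq_nonneg (1 - ‖y‖)]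
  have n2 : p ^ 2 * (δ * ((K + M) * (1 + ‖y‖) ^ 2))
      ≤ p ^ 2 * (δ * ((K + M) * (2 * (1 + ‖y‖ ^ 2)))) := by gcongr
  have n3 : 0 ≤ p ^ 2 * (δ * ((K + M) * (2 * (1 + ‖y‖ ^ 2)))) := by positivity
  have n4 : 0 ≤ K * δ * ‖y‖ ^ 2 := by positivity
  have n5 : 0 ≤ K * δ := by positivity
  nlinarith

theorem gx_moment {p : ℕ} (S : Matrix (Fin p) (Fin p) ℝ) (hS : S.PosDef) :
    Integrable fun y => Real.exp (gxU S y) * (1 + ‖y‖ ^ 2) := by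
  obtain ⟨B, h1, h2, h3⟩ := gx_factor S hS
  obtain ⟨κ, hκ, hn⟩ := gx_norm B h2
  have hi := (gx_integrable B h2 (1/4) (by norm_num)).const_mul
    (Real.exp (-(p * Real.log (2 * Real.pi) + Real.log S.det) / 2) * (1 + 4 * κ))
  refine hi.mono' ?_ (Filter.Eventually.of_forall fun y => ?_)
  · have := gx_cont S
    exact Continuous.aestronglyMeasurable (by fun_prop)
  rw [Real.norm_of_nonneg (by positivity)]
  have q0 : 0 ≤ ∑ i, (B.mulVec y i) ^ 2 := by positivity
  have hny := hn y
  rw [gxU, h1, gx_quad]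
  set q := ∑ i, (B.mulVec y i) ^ 2
  set c := -(p * Real.log (2 * Real.pi) + Real.log S.det) / 2
  have e : Real.exp (c - q / 2) = Real.exp c * Real.exp (-(1/4) * q) * Real.exp (-(q / 4)) := by
    rw [← Real.exp_add, ← Real.exp_add]; ring_nf
  rw [e]
  have l1 := Real.add_one_le_exp (q / 4)
  have l2 : 1 ≤ Real.exp (q / 4) := Real.one_le_exp (by positivity)
  have l3 : 1 + ‖y‖ ^ 2 ≤ (1 + 4 * κ) * Real.exp (q / 4) := by nlinarith
  have l4 : Real.exp (-(q / 4)) * (1 + ‖y‖ ^ 2) ≤ 1 + 4 * κ := by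
    rw [Real.exp_neg, inv_mul_le_iff₀ (Real.exp_pos _)]; linarith
  calc _ = Real.exp c * Real.exp (-(1/4) * q) * (Real.exp (-(q / 4)) * (1 + ‖y‖ ^ 2)) := by ring
    _ ≤ Real.exp c * Real.exp (-(1/4) * q) * (1 + 4 * κ) := by gcongr
    _ = _ := by ring

end helpers

/-- for symmetric positive definite Σ₁ there is a constant C(Σ₁) such that
‖N(a,Σ₁) - N(b,Σ₂)‖ ≤ C(Σ₁)(‖b - a‖_E + ‖Σ₂ - Σ₁‖_F) for all a, b and all symmetric
positive definite Σ₂. -/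
theorem stmt14 {p : ℕ} (S1 : Matrix (Fin p) (Fin p) ℝ) (hS1 : S1.PosDef) :
    ∃ C : ℝ, ∀ (a b : Fin p → ℝ) (S2 : Matrix (Fin p) (Fin p) ℝ), S2.PosDef →
      tvDist (gaussianPi a S1) (gaussianPi b S2)
        ≤ C * (Real.sqrt (∑ k, (b k - a k) ^ 2) + frobNorm (S2 - S1)) := by
  obtain ⟨K, hK, ε, hε, hloc⟩ := gx_local S1 hS1
  set M := K + ∑ i, ∑ j, |S1⁻¹ i j| with hM
  have hM0 : 0 ≤ M := by positivity
  set L := K + 2 * (p ^ 2 * (K + M)) with hL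
  have hL0 : 0 ≤ L := by positivity
  set I := ∫ y, Real.exp (gxU S1 y) * (1 + ‖y‖ ^ 2) with hI
  have hI0 : 0 ≤ I := integral_nonneg fun y => by positivity
  set η := min ε 1 with hη
  have hη0 : 0 < η := lt_min hε one_pos
  refine ⟨η⁻¹ + L * I, fun a b S2 hS2 => ?_⟩
  set D := Real.sqrt (∑ k, (b k - a k) ^ 2) with hD
  set F := frobNorm (S2 - S1) with hF
  have hD0 : 0 ≤ D := Real.sqrt_nonneg _
  have hF0 : 0 ≤ F := Real.sqrt_nonneg _
  rcases le_or_gt η (D + F) with h | h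
  · refine (gx_tv_le_one S1 S2 hS1 hS2 a b).trans ?_
    have h1 : 1 ≤ η⁻¹ * (D + F) := by
      rw [inv_mul_eq_div, le_div_iff₀ hη0]; linarith
    have h2 : 0 ≤ L * I * (D + F) := by positivity
    linarith
  · have hlε : D + F < ε := h.trans_le (min_le_left _ _)
    have hl1 : D + F ≤ 1 := (h.trans_le (min_le_right _ _)).le
    obtain ⟨c1, c2⟩ := hloc S2 (by linarith)
    have hFD : K * F ≤ K * (D + F) := by nlinarith
    have hKF : K * F ≤ K := by nlinarith
    have hb : ∀ y, |gxU S1 y - gxU S2 (y - (b - a))| ≤ (D + F) * (L * (1 + ‖y‖ ^ 2)) := by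
      intro y
      refine gx_U S1 S2 y (b - a) K M (D + F) ?_ (by positivity) hK.le hM0 hl1
        (fun i j => (c2 i j).trans hFD) ?_ (c1.trans hFD)
      · intro i
        have : |b i - a i| ≤ D := by
          apply Real.le_sqrt_of_sq_le
          rw [sq_abs]
          exact Finset.single_le_sum (f := fun k => (b k - a k) ^ 2) (fun k _ => sq_nonneg _)
            (Finset.mem_univ i)
        rw [Pi.sub_apply]; linarith
      · intro i j
        have t1 : |S1⁻¹ i j| ≤ ∑ i, ∑ j, |S1⁻¹ i j| := by
          refine le_trans ?_ (Finset.single_le_sum (f := fun i => ∑ j, |S1⁻¹ i j|)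
            (fun i _ => Finset.sum_nonneg fun j _ => abs_nonneg _) (Finset.mem_univ i))
          exact Finset.single_le_sum (f := fun j => |S1⁻¹ i j|) (fun j _ => abs_nonneg _)
            (Finset.mem_univ j)
        have t2 := c2 i j
        have t3 := abs_sub_abs_le_abs_sub (S2⁻¹ i j) (S1⁻¹ i j)
        linarith
    have := gx_tv S1 S2 hS1 hS2 a b
      (fun y => (D + F) * L * (Real.exp (gxU S1 y) * (1 + ‖y‖ ^ 2)))
      ((gx_moment S1 hS1).const_mul _) (fun y => by
        have := mul_le_mul_of_nonneg_left (hb y) (Real.exp_pos (gxU S1 y)).le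
        refine this.trans (le_of_eq ?_)
        ring)
    refine this.trans ?_
    rw [integral_const_mul, ← hI]
    have : 0 ≤ η⁻¹ * (D + F) := by positivity
    nlinarith
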